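/- Suppose the Assumptions hold and d₁ ≠ d₂. Then one of the following holds: (i) t₁ ∈ (x(a),x(d₁))×{y(a)} and w₁ = d₁, and t₂ ∈ {x(a)}×(y(d₂),y(a)) and w₂ = d₂; or (ii) t₁ ∈ (x(a),x(d₁))×{y(a)} and w₁ = d₁, and t₂ ∈ (−∞,x(a))×{y(a)} and w₂ ∈ {x(a)}×[y(d₂),y(a)); or (iii) t₁ ∈ {x(a)}×(y(a),∞) and w₁ ∈ (x(a),x(d₁)]×{y(a)}, and t₂ ∈ {x(a)}×(y(d₂),y(a)) and w₂ = d₂. Moreover, the segments (x(a),x(d₂)]×{y(a)} and {x(a)}×[y(d₁),y(a)) are both empty. -/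

import Mathlib

noncomputable section
open Classical

/-- The L1 (Manhattan) metric on ℝ². -/
def rho (u v : ℝ × ℝ) : ℝ := |u.1 - v.1| + |u.2 - v.2|

/-- `z` is between `u` and `v` (w.r.t. the L1 metric): the three points are
pairwise distinct and `ρ(u,v) = ρ(u,z) + ρ(z,v)`. -/
def MBtw (u z v : ℝ × ℝ) : Prop :=
  u ≠ z ∧ z ≠ v ∧ u ≠ v ∧ rho u v = rho u z + rho z v

/-- The line of `X` induced by distinct points `u, v`. -/
def lineThrough (X : Finset (ℝ × ℝ)) (u v : ℝ × ℝ) : Finset (ℝ × ℝ) :=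
  X.filter fun z => z = u ∨ z = v ∨ MBtw u z v ∨ MBtw z u v ∨ MBtw u v z

/-- `X` is non-collinear: no line induced by two distinct points of `X` equals `X`. -/
def NonCollinear (X : Finset (ℝ × ℝ)) : Prop :=
  ∀ u ∈ X, ∀ v ∈ X, u ≠ v → lineThrough X u v ≠ X

/-- `{p,q}` is an increasing pair. -/
def IncPair (p q : ℝ × ℝ) : Prop := 0 < (q.1 - p.1) * (q.2 - p.2)

/-- `{p,q}` is a decreasing pair. -/
def DecPair (p q : ℝ × ℝ) : Prop := (q.1 - p.1) * (q.2 - p.2) < 0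

/-- The partial order `≤_I`. -/
def leI (c d : ℝ × ℝ) : Prop := c.1 ≤ d.1 ∧ c.2 ≤ d.2

/-- `c <_I d`. -/
def ltI (c d : ℝ × ℝ) : Prop := leI c d ∧ c ≠ d

/-- The partial order `≤_D`. -/
def leD (c d : ℝ × ℝ) : Prop := c.1 ≤ d.1 ∧ d.2 ≤ c.2

/-- `c <_D d`. -/
def ltD (c d : ℝ × ℝ) : Prop := leD c d ∧ c ≠ d

/-- `(p,q)` is a blue arrow of `X`. -/
def BlueArrow (X : Finset (ℝ × ℝ)) (p q : ℝ × ℝ) : Prop :=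
  p ∈ X ∧ q ∈ X ∧ IncPair p q ∧ ltI p q ∧
  ∀ a b, a ∈ X → b ∈ X → IncPair a b → ltI a b →
    lineThrough X a b = lineThrough X p q → (ltI q b ∨ (q = b ∧ leI a p))

/-- `(p,q)` is a red arrow of `X`. -/
def RedArrow (X : Finset (ℝ × ℝ)) (p q : ℝ × ℝ) : Prop :=
  p ∈ X ∧ q ∈ X ∧ DecPair p q ∧ ltD p q ∧
  ∀ a b, a ∈ X → b ∈ X → DecPair a b → ltD a b →
    lineThrough X a b = lineThrough X p q → (ltD q b ∨ (q = b ∧ leD a p))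

/-- An arrow is a blue or a red arrow. -/
def Arrow (X : Finset (ℝ × ℝ)) (p q : ℝ × ℝ) : Prop :=
  BlueArrow X p q ∨ RedArrow X p q

/-- `a` is not an endpoint of any arrow of `X`. -/
def NotEndpoint (X : Finset (ℝ × ℝ)) (a : ℝ × ℝ) : Prop :=
  ∀ p q, Arrow X p q → a ≠ p ∧ a ≠ q

/-- Option (a): `t ∈ (x(a),x(d))×{y(a)}` and `w = d`. -/
def PlacementA (a d t w : ℝ × ℝ) : Prop :=
  (a.1 < t.1 ∧ t.1 < d.1 ∧ t.2 = a.2) ∧ w = d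

/-- Option (b): `t ∈ {x(a)}×(y(d),y(a))` and `w = d`. -/
def PlacementB (a d t w : ℝ × ℝ) : Prop :=
  (t.1 = a.1 ∧ d.2 < t.2 ∧ t.2 < a.2) ∧ w = d

/-- Option (c): `t ∈ {x(a)}×(y(a),∞)` and `w ∈ (x(a),x(d)]×{y(a)}`. -/
def PlacementC (a d t w : ℝ × ℝ) : Prop :=
  (t.1 = a.1 ∧ a.2 < t.2) ∧ (a.1 < w.1 ∧ w.1 ≤ d.1 ∧ w.2 = a.2)

/-- Option (d): `t ∈ (−∞,x(a))×{y(a)}` and `w ∈ {x(a)}×[y(d),y(a))`. -/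
def PlacementD (a d t w : ℝ × ℝ) : Prop :=
  (t.2 = a.2 ∧ t.1 < a.1) ∧ (w.1 = a.1 ∧ d.2 ≤ w.2 ∧ w.2 < a.2)

/-- The four placement options of Lemma 2 (placement). -/
def Placement (a d t w : ℝ × ℝ) : Fin 4 → Prop
  | 0 => PlacementA a d t w
  | 1 => PlacementB a d t w
  | 2 => PlacementC a d t w
  | 3 => PlacementD a d t w

/-!
For a decreasing pair `p, q` the line `⟨p,q⟩` consists of the points of `X` that form an increasing
pair with neither `p` nor `q`; dually for an increasing pair. So a point incomparable to one of `a`,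
`d₁` has to be incomparable to one of `t₁`, `w₁`, and conversely, and likewise for `a`, `d₂` and
`t₂`, `w₂`.

Since `a` is no endpoint, minimality of the red arrow leaves the four placements. Non-collinearity
of the vertical line through `a` excludes (b) for `d₁`, that of the horizontal line excludes (a) for
`d₂`; `d₂`, to the lower left of `d₁`, excludes (d) for `d₁`, and `d₁` excludes (c) for `d₂`. The
points of the two segments would lie on one of two equal lines but not on the other.

In fact (d) is impossible for `d₂` as well, so that case (ii) never occurs. It would yield a point
`v` to the lower left of `w₂`, which lies below `a` on the vertical line through `a`. The blue arrow
of `⟨v,a⟩` ends at some `q <_I a`; as `d₁ ∉ ⟨v,a⟩` and `w₂ ∈ ⟨v,a⟩`, one of `q`, `w₂` would lie in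
the empty segment `{x(a)}×[y(d₁),y(a))`.
-/

variable {X : Finset (ℝ × ℝ)} {a d d₁ d₂ p q r s t u v w z t₁ t₂ w₁ w₂ : ℝ × ℝ}

lemma incPair_iff :
    IncPair p q ↔ (p.1 < q.1 ∧ p.2 < q.2) ∨ (q.1 < p.1 ∧ q.2 < p.2) := by
  simp only [IncPair, mul_pos_iff, sub_pos, sub_neg]

lemma decPair_iff :
    DecPair p q ↔ (p.1 < q.1 ∧ q.2 < p.2) ∨ (q.1 < p.1 ∧ p.2 < q.2) := by
  simp only [DecPair, mul_neg_iff, sub_pos, sub_neg]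

lemma incPair_and_ltI_iff : IncPair p q ∧ ltI p q ↔ p.1 < q.1 ∧ p.2 < q.2 := by
  rw [incPair_iff, ltI, leI, ne_eq, Prod.ext_iff]
  grind

lemma decPair_and_ltD_iff : DecPair p q ∧ ltD p q ↔ p.1 < q.1 ∧ q.2 < p.2 := by
  rw [decPair_iff, ltD, leD, ne_eq, Prod.ext_iff]
  grind

lemma not_incPair_iff : ¬IncPair p q ↔ leD p q ∨ leD q p := by
  rw [incPair_iff, leD, leD]
  grind

lemma not_decPair_iff : ¬DecPair p q ↔ leI p q ∨ leI q p := by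
  rw [decPair_iff, leI, leI]
  grind

lemma abs_sub_eq_add_iff_mem_uIcc {x y z : ℝ} :
    |x - z| = |x - y| + |y - z| ↔ y ∈ Set.uIcc x z := by
  rw [← segment_eq_uIcc, mem_segment_iff_wbtw, ← dist_add_dist_eq_iff, eq_comm]
  rfl

lemma rho_eq_add_iff_mem_uIcc : rho u v = rho u z + rho z v ↔ z ∈ Set.uIcc u v := by
  rw [Set.uIcc_prod_eq, Set.mem_prod, ← abs_sub_eq_add_iff_mem_uIcc,
    ← abs_sub_eq_add_iff_mem_uIcc, rho, rho, rho]
  have h₁ := abs_sub_le u.1 z.1 v.1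
  have h₂ := abs_sub_le u.2 z.2 v.2
  constructor
  · intro h
    constructor <;> linarith
  · rintro ⟨h, h'⟩
    linarith

lemma left_mem_lineThrough (hu : u ∈ X) : u ∈ lineThrough X u v := by
  simp [lineThrough, hu]

lemma right_mem_lineThrough (hv : v ∈ X) : v ∈ lineThrough X u v := by
  simp [lineThrough, hv]

lemma mem_lineThrough_iff (huv : u ≠ v) :
    z ∈ lineThrough X u v ↔
      z ∈ X ∧ (z ∈ Set.uIcc u v ∨ u ∈ Set.uIcc z v ∨ v ∈ Set.uIcc u z) := by
  simp only [lineThrough, Finset.mem_filter, MBtw, rho_eq_add_iff_mem_uIcc]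
  by_cases hzu : z = u
  · simp [hzu]
  by_cases hzv : z = v
  · simp [hzv]
  simp [hzu, hzv, huv, Ne.symm hzu, Ne.symm hzv]

lemma mem_lineThrough_iff_of_decPair (h : DecPair p q) :
    z ∈ lineThrough X p q ↔ z ∈ X ∧ ¬IncPair z p ∧ ¬IncPair z q := by
  have hpq : p ≠ q := by rintro rfl; simp [DecPair] at h
  simp only [mem_lineThrough_iff hpq, Set.uIcc_prod_eq, Set.mem_prod, Set.mem_uIcc, incPair_iff]
  rw [decPair_iff] at h
  grind

lemma mem_lineThrough_iff_of_incPair (h : IncPair p q) :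
    z ∈ lineThrough X p q ↔ z ∈ X ∧ ¬DecPair z p ∧ ¬DecPair z q := by
  have hpq : p ≠ q := by rintro rfl; simp [IncPair] at h
  simp only [mem_lineThrough_iff hpq, Set.uIcc_prod_eq, Set.mem_prod, Set.mem_uIcc, decPair_iff]
  rw [incPair_iff] at h
  grind

lemma mem_lineThrough_iff_of_fst_eq (h₁ : p.1 = q.1) (h₂ : q.2 < p.2) :
    z ∈ lineThrough X p q ↔ z ∈ X ∧ (z.1 = p.1 ∨ z.2 ∉ Set.Ioo q.2 p.2) := by
  have hpq : p ≠ q := by rintro rfl; exact lt_irrefl _ h₂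
  simp only [mem_lineThrough_iff hpq, Set.uIcc_prod_eq, Set.mem_prod, Set.mem_uIcc, Set.mem_Ioo]
  grind

lemma mem_lineThrough_iff_of_snd_eq (h₁ : p.1 < q.1) (h₂ : p.2 = q.2) :
    z ∈ lineThrough X p q ↔ z ∈ X ∧ (z.2 = p.2 ∨ z.1 ∉ Set.Ioo p.1 q.1) := by
  have hpq : p ≠ q := by rintro rfl; exact lt_irrefl _ h₁
  simp only [mem_lineThrough_iff hpq, Set.uIcc_prod_eq, Set.mem_prod, Set.mem_uIcc, Set.mem_Ioo]
  grind

lemma incPair_or_iff_of_lineThrough_eq (hpq : DecPair p q) (hrs : DecPair r s)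
    (hl : lineThrough X p q = lineThrough X r s) (hz : z ∈ X) :
    IncPair z p ∨ IncPair z q ↔ IncPair z r ∨ IncPair z s := by
  have h := Finset.ext_iff.1 hl z
  rw [mem_lineThrough_iff_of_decPair hpq, mem_lineThrough_iff_of_decPair hrs] at h
  tauto

lemma decPair_or_iff_of_lineThrough_eq (hpq : IncPair p q) (hrs : IncPair r s)
    (hl : lineThrough X p q = lineThrough X r s) (hz : z ∈ X) :
    DecPair z p ∨ DecPair z q ↔ DecPair z r ∨ DecPair z s := by
  have h := Finset.ext_iff.1 hl z
  rw [mem_lineThrough_iff_of_incPair hpq, mem_lineThrough_iff_of_incPair hrs] at h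
  tauto

lemma NonCollinear.exists_notMem_lineThrough (h : NonCollinear X) (hp : p ∈ X) (hq : q ∈ X)
    (hpq : p ≠ q) : ∃ z ∈ X, z ∉ lineThrough X p q := by
  by_contra! hc
  exact h p hp q hq hpq (Finset.Subset.antisymm (Finset.filter_subset _ _) hc)

lemma NonCollinear.exists_snd_mem_Ioo (h : NonCollinear X) (hp : p ∈ X) (hq : q ∈ X)
    (h₁ : p.1 = q.1) (h₂ : q.2 < p.2) : ∃ z ∈ X, z.1 ≠ p.1 ∧ z.2 ∈ Set.Ioo q.2 p.2 := by
  obtain ⟨z, hz, hzl⟩ := h.exists_notMem_lineThrough hp hq fun hpq => h₂.ne' (congrArg Prod.snd hpq)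
  rw [mem_lineThrough_iff_of_fst_eq h₁ h₂] at hzl
  exact ⟨z, hz, by tauto⟩

lemma NonCollinear.exists_fst_mem_Ioo (h : NonCollinear X) (hp : p ∈ X) (hq : q ∈ X)
    (h₁ : p.1 < q.1) (h₂ : p.2 = q.2) : ∃ z ∈ X, z.2 ≠ p.2 ∧ z.1 ∈ Set.Ioo p.1 q.1 := by
  obtain ⟨z, hz, hzl⟩ := h.exists_notMem_lineThrough hp hq fun hpq => h₁.ne (congrArg Prod.fst hpq)
  rw [mem_lineThrough_iff_of_snd_eq h₁ h₂] at hzl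
  exact ⟨z, hz, by tauto⟩

lemma leI_or_leI_of_lineThrough_eq (hrs : IncPair r s)
    (hl : lineThrough X p q = lineThrough X r s) (hp : p ∈ X) (hq : q ∈ X) :
    (leI p r ∨ leI r p) ∧ (leI q s ∨ leI s q) := by
  have hp_line : p ∈ lineThrough X r s := hl ▸ left_mem_lineThrough hp
  have hq_line : q ∈ lineThrough X r s := hl ▸ right_mem_lineThrough hq
  rw [mem_lineThrough_iff_of_incPair hrs] at hp_line hq_line
  exact ⟨not_decPair_iff.1 hp_line.2.1, not_decPair_iff.1 hq_line.2.2⟩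

lemma exists_blueArrow (hu : u ∈ X) (hv : v ∈ X) (hinc : IncPair u v) (hlt : ltI u v) :
    ∃ p q, BlueArrow X p q ∧ lineThrough X p q = lineThrough X u v := by
  let generators := (X ×ˢ X).filter fun e =>
    (IncPair e.1 e.2 ∧ ltI e.1 e.2) ∧ lineThrough X e.1 e.2 = lineThrough X u v
  have mem_generators {p q : ℝ × ℝ} : (p, q) ∈ generators ↔
      (p ∈ X ∧ q ∈ X) ∧ (IncPair p q ∧ ltI p q) ∧ lineThrough X p q = lineThrough X u v := by
    simp only [generators, Finset.mem_filter, Finset.mem_product]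
  -- Heads of generators are pairwise comparable, and so are tails: lexicographic minimality with
  -- respect to the head and then the reversed tail is therefore the condition on a blue arrow.
  obtain ⟨⟨p, q⟩, hmin⟩ := generators.exists_minimalFor
    (fun e => toLex (e.2, OrderDual.toDual e.1))
    ⟨(u, v), mem_generators.2 ⟨⟨hu, hv⟩, ⟨hinc, hlt⟩, rfl⟩⟩
  obtain ⟨⟨hp, hq⟩, ⟨hpq_inc, hpq_lt⟩, hpq_line⟩ := mem_generators.1 hmin.prop
  refine ⟨p, q, ⟨hp, hq, hpq_inc, hpq_lt, fun b c hb hc hbc hbc_lt hl => ?_⟩, hpq_line⟩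
  obtain ⟨htails, hheads⟩ := leI_or_leI_of_lineThrough_eq hbc hl.symm hp hq
  have hnot_lt := hmin.not_lt (mem_generators.2 ⟨⟨hb, hc⟩, ⟨hbc, hbc_lt⟩, hl.trans hpq_line⟩)
  simp only [Prod.Lex.toLex_lt_toLex, OrderDual.toDual_lt_toDual, not_or, not_and] at hnot_lt
  by_cases hqc : q = c
  · exact .inr ⟨hqc, htails.elim
      (fun hpb => (eq_of_le_of_not_lt hpb (hnot_lt.2 hqc.symm)).ge) id⟩
  · exact .inl ⟨hheads.resolve_right
      fun hcq => hnot_lt.1 (lt_of_le_of_ne hcq (Ne.symm hqc)), hqc⟩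

/-- `d` is the point `d₁` of the paper: a highest point of `X` in the fourth quadrant of `a`, and
the leftmost such point. -/
structure IsHighestSE (X : Finset (ℝ × ℝ)) (a d : ℝ × ℝ) : Prop where
  mem : d ∈ X
  mem_quadrant : a.1 < d.1 ∧ d.2 < a.2
  strip_empty : ∀ z ∈ X, ¬(a.1 < z.1 ∧ d.2 < z.2 ∧ z.2 < a.2)
  segment_empty : ∀ z ∈ X, ¬(a.1 < z.1 ∧ z.1 < d.1 ∧ z.2 = d.2)

/-- `d` is the point `d₂` of the paper: a leftmost point of `X` in the fourth quadrant of `a`, and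
the highest such point. -/
structure IsLeftmostSE (X : Finset (ℝ × ℝ)) (a d : ℝ × ℝ) : Prop where
  mem : d ∈ X
  mem_quadrant : a.1 < d.1 ∧ d.2 < a.2
  strip_empty : ∀ z ∈ X, ¬(a.1 < z.1 ∧ z.1 < d.1 ∧ z.2 < a.2)
  segment_empty : ∀ z ∈ X, ¬(z.1 = d.1 ∧ d.2 < z.2 ∧ z.2 < a.2)

lemma IsHighestSE.decPair (h : IsHighestSE X a d) : DecPair a d :=
  (decPair_and_ltD_iff.2 h.mem_quadrant).1

lemma IsLeftmostSE.decPair (h : IsLeftmostSE X a d) : DecPair a d :=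
  (decPair_and_ltD_iff.2 h.mem_quadrant).1

lemma IsHighestSE.eq_of_mem_box (h : IsHighestSE X a d) (hz : z ∈ X) (h₁ : a.1 < z.1)
    (h₂ : z.1 ≤ d.1) (h₃ : d.2 ≤ z.2) (h₄ : z.2 < a.2) : z = d := by
  have hstrip := h.strip_empty z hz
  have hsegment := h.segment_empty z hz
  rw [Prod.ext_iff]
  grind

lemma IsLeftmostSE.eq_of_mem_box (h : IsLeftmostSE X a d) (hz : z ∈ X) (h₁ : a.1 < z.1)
    (h₂ : z.1 ≤ d.1) (h₃ : d.2 ≤ z.2) (h₄ : z.2 < a.2) : z = d := by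
  have hstrip := h.strip_empty z hz
  have hsegment := h.segment_empty z hz
  rw [Prod.ext_iff]
  grind

lemma IsHighestSE.lt_of_ne (h₁ : IsHighestSE X a d₁) (h₂ : IsLeftmostSE X a d₂) (hne : d₁ ≠ d₂) :
    d₂.1 < d₁.1 ∧ d₂.2 < d₁.2 := by
  obtain ⟨had₁, hd₁a⟩ := h₁.mem_quadrant
  obtain ⟨had₂, hd₂a⟩ := h₂.mem_quadrant
  have hfst : d₂.1 ≤ d₁.1 := not_lt.1 fun h => h₂.strip_empty d₁ h₁.mem ⟨had₁, h, hd₁a⟩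
  have hsnd : d₂.2 ≤ d₁.2 := not_lt.1 fun h => h₁.strip_empty d₂ h₂.mem ⟨had₂, h, hd₂a⟩
  constructor
  · exact lt_of_le_of_ne hfst fun h => hne (h₂.eq_of_mem_box h₁.mem had₁ h.ge hsnd hd₁a)
  · exact lt_of_le_of_ne hsnd fun h => hne (h₁.eq_of_mem_box h₂.mem had₂ hfst h.ge hd₂a).symm

lemma placementA_or_placementB (ht : t ∈ X) (hta : t ≠ a) (hat : leD a t)
    (htd : t.1 < d.1 ∧ d.2 < t.2)
    (hbox : ∀ z ∈ X, a.1 < z.1 → z.1 ≤ d.1 → d.2 ≤ z.2 → z.2 < a.2 → z = d) :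
    PlacementA a d t d ∨ PlacementB a d t d := by
  have hside : t.1 = a.1 ∨ t.2 = a.2 := by
    by_contra! h
    have htd_eq := hbox t ht (lt_of_le_of_ne hat.1 h.1.symm) htd.1.le htd.2.le
      (lt_of_le_of_ne hat.2 h.2)
    exact htd.1.ne (congrArg Prod.fst htd_eq)
  rcases hside with h | h
  · have ht₂ : t.2 < a.2 := lt_of_le_of_ne hat.2 fun h' => hta (Prod.ext h h')
    exact .inr ⟨⟨h, htd.2, ht₂⟩, rfl⟩
  · have ht₁ : a.1 < t.1 := lt_of_le_of_ne hat.1 fun h' => hta (Prod.ext h'.symm h)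
    exact .inl ⟨⟨ht₁, htd.1, h⟩, rfl⟩

lemma placementC_or_placementD (ht : t ∈ X) (hw : w ∈ X) (hwa : w ≠ a)
    (htw : t.1 < w.1 ∧ w.2 < t.2) (hwd : ltD w d) (hta_inc : ¬IncPair t a) (hwa_inc : ¬IncPair w a)
    (hQ2 : ∀ z ∈ X, ¬(z.1 < a.1 ∧ a.2 < z.2))
    (hbox : ∀ z ∈ X, a.1 < z.1 → z.1 ≤ d.1 → d.2 ≤ z.2 → z.2 < a.2 → z = d) :
    PlacementC a d t w ∨ PlacementD a d t w := by
  have hw_quadrant : ¬(a.1 < w.1 ∧ w.2 < a.2) := fun h =>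
    hwd.2 (hbox w hw h.1 hwd.1.1 hwd.1.2 h.2)
  have haw : leD a w := (not_incPair_iff.1 hwa_inc).resolve_left fun h =>
    hQ2 t ht ⟨htw.1.trans_le h.1, h.2.trans_lt htw.2⟩
  have hta : leD t a := (not_incPair_iff.1 hta_inc).resolve_right fun h =>
    hw_quadrant ⟨h.1.trans_lt htw.1, htw.2.trans_le h.2⟩
  rcases haw.1.eq_or_lt with hw₁ | hw₁
  · have hw₂ : w.2 < a.2 := lt_of_le_of_ne haw.2 fun h => hwa (Prod.ext hw₁.symm h)
    have ht₁ : t.1 < a.1 := htw.1.trans_eq hw₁.symm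
    have ht₂ : t.2 = a.2 := (eq_of_le_of_not_lt hta.2 fun h => hQ2 t ht ⟨ht₁, h⟩).symm
    exact .inr ⟨⟨ht₂, ht₁⟩, hw₁.symm, hwd.1.2, hw₂⟩
  · have hw₂ : w.2 = a.2 := eq_of_le_of_not_lt haw.2 fun h => hw_quadrant ⟨hw₁, h⟩
    have ht₂ : a.2 < t.2 := hw₂.symm.trans_lt htw.2
    have ht₁ : t.1 = a.1 := eq_of_le_of_not_lt hta.1 fun h => hQ2 t ht ⟨h, ht₂⟩
    exact .inl ⟨⟨ht₁, ht₂⟩, hw₁, hwd.1.1, hw₂⟩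

lemma RedArrow.placement (htw : RedArrow X t w) (ha : a ∈ X) (hiso : NotEndpoint X a)
    (hQ2 : ∀ z ∈ X, ¬(z.1 < a.1 ∧ a.2 < z.2)) (hd : d ∈ X) (had : a.1 < d.1 ∧ d.2 < a.2)
    (hbox : ∀ z ∈ X, a.1 < z.1 → z.1 ≤ d.1 → d.2 ≤ z.2 → z.2 < a.2 → z = d)
    (hl : lineThrough X t w = lineThrough X a d) :
    (PlacementA a d t w ∨ PlacementB a d t w) ∨ (PlacementC a d t w ∨ PlacementD a d t w) := by
  obtain ⟨hat, haw⟩ := hiso t w (.inr htw)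
  obtain ⟨ht, hw, hdec, hlt, hmin⟩ := htw
  have htw_lt := decPair_and_ltD_iff.1 ⟨hdec, hlt⟩
  obtain ⟨hdec_ad, hlt_ad⟩ := decPair_and_ltD_iff.2 had
  rcases hmin a d ha hd hdec_ad hlt_ad hl.symm with hwd | ⟨rfl, hat_le⟩
  · have ht_line : t ∈ lineThrough X a d := hl ▸ left_mem_lineThrough ht
    have hw_line : w ∈ lineThrough X a d := hl ▸ right_mem_lineThrough hw
    rw [mem_lineThrough_iff_of_decPair hdec_ad] at ht_line hw_line
    exact .inr <| placementC_or_placementD ht hw haw.symm htw_lt hwd ht_line.2.1 hw_line.2.1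
      hQ2 hbox
  · exact .inl <| placementA_or_placementB ht hat.symm hat_le htw_lt hbox

lemma IsHighestSE.not_placementB (hd : IsHighestSE X a d) (hnc : NonCollinear X) (ha : a ∈ X)
    (ht : t ∈ X) (hdec : DecPair t w) (hl : lineThrough X t w = lineThrough X a d) :
    ¬PlacementB a d t w := by
  rintro ⟨⟨ht₁, hdt, hta⟩, rfl⟩
  obtain ⟨z, hz, hz₁, htz, hza⟩ := hnc.exists_snd_mem_Ioo ha ht ht₁.symm hta
  have hz_left : z.1 < a.1 := lt_of_le_of_ne
    (not_lt.1 fun h => hd.strip_empty z hz ⟨h, hdt.trans htz, hza⟩) hz₁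
  have hzt : leD z t := ⟨hz_left.le.trans_eq ht₁.symm, htz.le⟩
  have hzw : leD z w := ⟨hz_left.le.trans hd.mem_quadrant.1.le, (hdt.trans htz).le⟩
  have hza_inc : IncPair z a := incPair_iff.2 (.inl ⟨hz_left, hza⟩)
  exact ((incPair_or_iff_of_lineThrough_eq hdec hd.decPair hl hz).2 (.inl hza_inc)).elim
    (not_incPair_iff.2 (.inl hzt)) (not_incPair_iff.2 (.inl hzw))

lemma IsLeftmostSE.not_placementA (hd : IsLeftmostSE X a d) (hnc : NonCollinear X) (ha : a ∈ X)
    (ht : t ∈ X) (hdec : DecPair t w) (hl : lineThrough X t w = lineThrough X a d) :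
    ¬PlacementA a d t w := by
  rintro ⟨⟨hat, htd, ht₂⟩, rfl⟩
  obtain ⟨z, hz, hz₂, haz, hzt₁⟩ := hnc.exists_fst_mem_Ioo ha ht hat ht₂.symm
  have hz_above : a.2 < z.2 := lt_of_le_of_ne
    (not_lt.1 fun h => hd.strip_empty z hz ⟨haz, hzt₁.trans htd, h⟩) hz₂.symm
  have hzt : leD z t := ⟨hzt₁.le, ht₂.le.trans hz_above.le⟩
  have hzw : leD z w := ⟨(hzt₁.trans htd).le, hd.mem_quadrant.2.le.trans hz_above.le⟩
  have hza_inc : IncPair z a := incPair_iff.2 (.inr ⟨haz, hz_above⟩)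
  exact ((incPair_or_iff_of_lineThrough_eq hdec hd.decPair hl hz).2 (.inl hza_inc)).elim
    (not_incPair_iff.2 (.inl hzt)) (not_incPair_iff.2 (.inl hzw))

lemma not_placementC_of_mem_northEast (had : DecPair a d) (hdec : DecPair t w)
    (hl : lineThrough X t w = lineThrough X a d) (hz : z ∈ X) (hdz : d.1 < z.1 ∧ d.2 < z.2)
    (hza : z.2 < a.2) : ¬PlacementC a d t w := by
  rintro ⟨⟨ht₁, hat⟩, haw, hwd, hw₂⟩
  have htz : leD t z := ⟨by linarith, by linarith⟩
  have hwz : leD w z := ⟨by linarith, by linarith⟩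
  have hzd_inc : IncPair z d := incPair_iff.2 (.inr hdz)
  exact ((incPair_or_iff_of_lineThrough_eq hdec had hl hz).2 (.inr hzd_inc)).elim
    (not_incPair_iff.2 (.inr htz)) (not_incPair_iff.2 (.inr hwz))

lemma not_placementD_of_mem_southWest (had : DecPair a d) (hdec : DecPair t w)
    (hl : lineThrough X t w = lineThrough X a d) (hz : z ∈ X) (hzd : z.1 < d.1 ∧ z.2 < d.2)
    (haz : a.1 < z.1) : ¬PlacementD a d t w := by
  rintro ⟨⟨ht₂, hta⟩, hw₁, hdw, hwa⟩
  have htz : leD t z := ⟨by linarith, by linarith⟩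
  have hwz : leD w z := ⟨by linarith, by linarith⟩
  have hzd_inc : IncPair z d := incPair_iff.2 (.inl hzd)
  exact ((incPair_or_iff_of_lineThrough_eq hdec had hl hz).2 (.inr hzd_inc)).elim
    (not_incPair_iff.2 (.inr htz)) (not_incPair_iff.2 (.inr hwz))

lemma IsHighestSE.placementA_or_placementC (hd : IsHighestSE X a d) (hnc : NonCollinear X)
    (ha : a ∈ X) (hiso : NotEndpoint X a) (hQ2 : ∀ z ∈ X, ¬(z.1 < a.1 ∧ a.2 < z.2))
    (htw : RedArrow X t w) (hl : lineThrough X t w = lineThrough X a d) (hz : z ∈ X)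
    (hzd : z.1 < d.1 ∧ z.2 < d.2) (haz : a.1 < z.1) :
    PlacementA a d t w ∨ PlacementC a d t w := by
  have ⟨ht, _, hdec, _⟩ := htw
  have hB := hd.not_placementB hnc ha ht hdec hl
  have hD := not_placementD_of_mem_southWest hd.decPair hdec hl hz hzd haz
  have hplacement := htw.placement ha hiso hQ2 hd.mem hd.mem_quadrant
    (fun _ => hd.eq_of_mem_box) hl
  tauto

lemma IsLeftmostSE.placementB_or_placementD (hd : IsLeftmostSE X a d) (hnc : NonCollinear X)
    (ha : a ∈ X) (hiso : NotEndpoint X a) (hQ2 : ∀ z ∈ X, ¬(z.1 < a.1 ∧ a.2 < z.2))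
    (htw : RedArrow X t w) (hl : lineThrough X t w = lineThrough X a d) (hz : z ∈ X)
    (hdz : d.1 < z.1 ∧ d.2 < z.2) (hza : z.2 < a.2) :
    PlacementB a d t w ∨ PlacementD a d t w := by
  have ⟨ht, _, hdec, _⟩ := htw
  have hA := hd.not_placementA hnc ha ht hdec hl
  have hC := not_placementC_of_mem_northEast hd.decPair hdec hl hz hdz hza
  have hplacement := htw.placement ha hiso hQ2 hd.mem hd.mem_quadrant
    (fun _ => hd.eq_of_mem_box) hl
  tauto

lemma vertical_segment_empty (had : a.1 < d.1 ∧ d.2 < a.2) (hdec : DecPair t w)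
    (hl : lineThrough X t w = lineThrough X a d) (h : PlacementA a d t w ∨ PlacementC a d t w) :
    ∀ z ∈ X, ¬(z.1 = a.1 ∧ d.2 ≤ z.2 ∧ z.2 < a.2) := by
  rintro z hz ⟨hz₁, hdz, hza⟩
  have haz : leD a z := ⟨hz₁.ge, hza.le⟩
  have hzd : leD z d := ⟨hz₁.trans_le had.1.le, hdz⟩
  have hz_line : ¬(IncPair z t ∨ IncPair z w) := by
    rw [incPair_or_iff_of_lineThrough_eq hdec (decPair_and_ltD_iff.2 had).1 hl hz, not_or]
    exact ⟨not_incPair_iff.2 (.inr haz), not_incPair_iff.2 (.inl hzd)⟩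
  rcases h with ⟨⟨hat, _, ht₂⟩, _⟩ | ⟨_, haw, _, hw₂⟩
  · exact hz_line (.inl (incPair_iff.2 (.inl ⟨by linarith, by linarith⟩)))
  · exact hz_line (.inr (incPair_iff.2 (.inl ⟨by linarith, by linarith⟩)))

lemma horizontal_segment_empty (had : a.1 < d.1 ∧ d.2 < a.2) (hdec : DecPair t w)
    (hl : lineThrough X t w = lineThrough X a d) (h : PlacementB a d t w ∨ PlacementD a d t w) :
    ∀ z ∈ X, ¬(a.1 < z.1 ∧ z.1 ≤ d.1 ∧ z.2 = a.2) := by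
  rintro z hz ⟨haz₁, hzd₁, hz₂⟩
  have haz : leD a z := ⟨haz₁.le, hz₂.le⟩
  have hzd : leD z d := ⟨hzd₁, had.2.le.trans_eq hz₂.symm⟩
  have hz_line : ¬(IncPair z t ∨ IncPair z w) := by
    rw [incPair_or_iff_of_lineThrough_eq hdec (decPair_and_ltD_iff.2 had).1 hl hz, not_or]
    exact ⟨not_incPair_iff.2 (.inr haz), not_incPair_iff.2 (.inl hzd)⟩
  rcases h with ⟨⟨ht₁, _, hta⟩, _⟩ | ⟨_, hw₁, _, hwa⟩
  · exact hz_line (.inl (incPair_iff.2 (.inr ⟨by linarith, by linarith⟩)))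
  · exact hz_line (.inr (incPair_iff.2 (.inr ⟨by linarith, by linarith⟩)))

lemma NotEndpoint.exists_blueArrow_ltI (hiso : NotEndpoint X a) (ha : a ∈ X) (hv : v ∈ X)
    (hinc : IncPair v a) (hlt : ltI v a) :
    ∃ p q, BlueArrow X p q ∧ lineThrough X p q = lineThrough X v a ∧ ltI q a := by
  obtain ⟨p, q, hpq, hl⟩ := exists_blueArrow hv ha hinc hlt
  have haq : a ≠ q := (hiso p q (.inl hpq)).2
  have ⟨_, _, _, _, hmin⟩ := hpq
  exact ⟨p, q, hpq, hl, (hmin v a hv ha hinc hlt hl.symm).resolve_right fun h => haq h.1.symm⟩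

lemma NotEndpoint.exists_mem_vertical_segment (hiso : NotEndpoint X a) (ha : a ∈ X) (hv : v ∈ X)
    (hw : w ∈ X) (hd : d ∈ X) (hva : v.1 < a.1) (hvw : v.2 ≤ w.2) (hw₁ : w.1 = a.1)
    (hw₂ : w.2 < a.2) (had : a.1 < d.1 ∧ d.2 < a.2) :
    ∃ z ∈ X, z.1 = a.1 ∧ d.2 ≤ z.2 ∧ z.2 < a.2 := by
  obtain ⟨hinc_va, hlt_va⟩ := incPair_and_ltI_iff.2 ⟨hva, hvw.trans_lt hw₂⟩
  obtain ⟨p, q, ⟨-, hq, hinc, hlt, -⟩, hl, hqa, hqa_ne⟩ :=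
    hiso.exists_blueArrow_ltI ha hv hinc_va hlt_va
  have hdq : d.2 < q.2 := by
    by_contra! hqd₂
    have hqd : leI q d := ⟨hqa.1.trans had.1.le, hqd₂⟩
    have hpd : leI p d := ⟨hlt.1.1.trans hqd.1, hlt.1.2.trans hqd.2⟩
    have hda_dec : DecPair d a := decPair_iff.2 (.inr had)
    exact ((decPair_or_iff_of_lineThrough_eq hinc hinc_va hl hd).2 (.inr hda_dec)).elim
      (not_decPair_iff.2 (.inr hpd)) (not_decPair_iff.2 (.inr hqd))
  have hwq_dec : ¬DecPair w q := fun h =>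
    ((decPair_or_iff_of_lineThrough_eq hinc hinc_va hl hw).1 (.inr h)).elim
      (not_decPair_iff.2 (.inr ⟨hva.le.trans_eq hw₁.symm, hvw⟩))
      (not_decPair_iff.2 (.inl ⟨hw₁.le, hw₂.le⟩))
  rcases hqa.1.eq_or_lt with hq₁ | hq₁
  · exact ⟨q, hq, hq₁, hdq.le, lt_of_le_of_ne hqa.2 fun h => hqa_ne (Prod.ext hq₁ h)⟩
  · have hqw : leI q w := (not_decPair_iff.1 hwq_dec).resolve_left fun h =>
      (hq₁.trans_eq hw₁.symm).not_ge h.1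
    exact ⟨w, hw, hw₁, hdq.le.trans hqw.2, hw₂⟩

lemma not_placementD_of_vertical_segment_empty (hnc : NonCollinear X) (ha : a ∈ X)
    (hiso : NotEndpoint X a) (hQ2 : ∀ z ∈ X, ¬(z.1 < a.1 ∧ a.2 < z.2)) (had : DecPair a d)
    (htw : RedArrow X t w) (hl : lineThrough X t w = lineThrough X a d)
    (hs : s ∈ X) (has : a.1 < s.1 ∧ s.2 < a.2)
    (hseg : ∀ z ∈ X, ¬(z.1 = a.1 ∧ s.2 ≤ z.2 ∧ z.2 < a.2)) :
    ¬PlacementD a d t w := by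
  rintro ⟨⟨ht₂, hta⟩, hw₁, -, hwa⟩
  obtain ⟨ht, hw, hdec, -⟩ := htw
  obtain ⟨v, hv, hv₂, htv₁, hva⟩ := hnc.exists_fst_mem_Ioo ht ha hta ht₂
  have hv_below : v.2 < a.2 :=
    lt_of_le_of_ne (not_lt.1 fun h => hQ2 v hv ⟨hva, h⟩) (ht₂ ▸ hv₂)
  have hvw : v.2 < w.2 := by
    by_contra! hwv
    have hva_inc : IncPair v a := incPair_iff.2 (.inl ⟨hva, hv_below⟩)
    have htv : leD t v := ⟨htv₁.le, hv_below.le.trans_eq ht₂.symm⟩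
    have hvw : leD v w := ⟨hva.le.trans_eq hw₁.symm, hwv⟩
    exact ((incPair_or_iff_of_lineThrough_eq hdec had hl hv).2 (.inl hva_inc)).elim
      (not_incPair_iff.2 (.inr htv)) (not_incPair_iff.2 (.inl hvw))
  obtain ⟨z, hz, hz_seg⟩ := hiso.exists_mem_vertical_segment ha hv hw hs hva hvw.le hw₁ hwa has
  exact hseg z hz hz_seg

theorem placement_locations_general (hnc : NonCollinear X) (ha : a ∈ X) (hiso : NotEndpoint X a)
    (hQ2 : ∀ z ∈ X, ¬(z.1 < a.1 ∧ a.2 < z.2))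
    (hd₁ : IsHighestSE X a d₁) (hd₂ : IsLeftmostSE X a d₂) (hne : d₁ ≠ d₂)
    (ht₁ : RedArrow X t₁ w₁) (hl₁ : lineThrough X t₁ w₁ = lineThrough X a d₁)
    (ht₂ : RedArrow X t₂ w₂) (hl₂ : lineThrough X t₂ w₂ = lineThrough X a d₂) :
    (PlacementA a d₁ t₁ w₁ ∨ PlacementC a d₁ t₁ w₁) ∧ PlacementB a d₂ t₂ w₂ ∧
      (∀ z ∈ X, ¬(a.1 < z.1 ∧ z.1 ≤ d₂.1 ∧ z.2 = a.2)) ∧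
      (∀ z ∈ X, ¬(z.1 = a.1 ∧ d₁.2 ≤ z.2 ∧ z.2 < a.2)) := by
  have hlt : d₂.1 < d₁.1 ∧ d₂.2 < d₁.2 := hd₁.lt_of_ne hd₂ hne
  have hAC : PlacementA a d₁ t₁ w₁ ∨ PlacementC a d₁ t₁ w₁ :=
    hd₁.placementA_or_placementC hnc ha hiso hQ2 ht₁ hl₁ hd₂.mem hlt hd₂.mem_quadrant.1
  have hBD : PlacementB a d₂ t₂ w₂ ∨ PlacementD a d₂ t₂ w₂ :=
    hd₂.placementB_or_placementD hnc ha hiso hQ2 ht₂ hl₂ hd₁.mem hlt hd₁.mem_quadrant.2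
  have hvertical := vertical_segment_empty hd₁.mem_quadrant ht₁.2.2.1 hl₁ hAC
  have hhorizontal := horizontal_segment_empty hd₂.mem_quadrant ht₂.2.2.1 hl₂ hBD
  have hD : ¬PlacementD a d₂ t₂ w₂ := not_placementD_of_vertical_segment_empty hnc ha hiso hQ2
    hd₂.decPair ht₂ hl₂ hd₁.mem hd₁.mem_quadrant hvertical
  exact ⟨hAC, hBD.resolve_right hD, hhorizontal, hvertical⟩

/-- Under the Assumptions, if `d₁ ≠ d₂` then the placements `(t₁,w₁)`/`(t₂,w₂)`
follow options (a)/(b), (a)/(d), or (c)/(b), and moreover the segments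
`(x(a),x(d₂)]×{y(a)}` and `{x(a)}×[y(d₁),y(a))` are both empty. -/
theorem placement_locations (X : Finset (ℝ × ℝ)) (a d₁ d₂ t₁ w₁ t₂ w₂ : ℝ × ℝ)
    (hnc : NonCollinear X) (haX : a ∈ X) (hiso : NotEndpoint X a)
    (hQ2 : ∀ z ∈ X, ¬(z.1 < a.1 ∧ a.2 < z.2))
    (hQ4 : ∃ z ∈ X, a.1 < z.1 ∧ z.2 < a.2)
    (hd1X : d₁ ∈ X) (hd1 : a.1 < d₁.1 ∧ d₁.2 < a.2)
    (hd1strip : ∀ z ∈ X, ¬(a.1 < z.1 ∧ d₁.2 < z.2 ∧ z.2 < a.2))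
    (hd1seg : ∀ z ∈ X, ¬(a.1 < z.1 ∧ z.1 < d₁.1 ∧ z.2 = d₁.2))
    (hd2X : d₂ ∈ X) (hd2 : a.1 < d₂.1 ∧ d₂.2 < a.2)
    (hd2strip : ∀ z ∈ X, ¬(a.1 < z.1 ∧ z.1 < d₂.1 ∧ z.2 < a.2))
    (hd2seg : ∀ z ∈ X, ¬(z.1 = d₂.1 ∧ d₂.2 < z.2 ∧ z.2 < a.2))
    (ht1 : RedArrow X t₁ w₁) (hl1 : lineThrough X t₁ w₁ = lineThrough X a d₁)
    (ht2 : RedArrow X t₂ w₂) (hl2 : lineThrough X t₂ w₂ = lineThrough X a d₂)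
    (hne : d₁ ≠ d₂) :
    ((PlacementA a d₁ t₁ w₁ ∧ PlacementB a d₂ t₂ w₂) ∨
     (PlacementA a d₁ t₁ w₁ ∧ PlacementD a d₂ t₂ w₂) ∨
     (PlacementC a d₁ t₁ w₁ ∧ PlacementB a d₂ t₂ w₂)) ∧
    (∀ z ∈ X, ¬(a.1 < z.1 ∧ z.1 ≤ d₂.1 ∧ z.2 = a.2)) ∧
    (∀ z ∈ X, ¬(z.1 = a.1 ∧ d₁.2 ≤ z.2 ∧ z.2 < a.2)) := by
  obtain ⟨hAC, hB, hhorizontal, hvertical⟩ := placement_locations_general hnc haX hiso hQ2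
    ⟨hd1X, hd1, hd1strip, hd1seg⟩ ⟨hd2X, hd2, hd2strip, hd2seg⟩ hne ht1 hl1 ht2 hl2
  exact ⟨hAC.elim (fun hA => .inl ⟨hA, hB⟩) fun hC => .inr (.inr ⟨hC, hB⟩), hhorizontal, hvertical⟩
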